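/- For all integers n ≥ 1 and k ≥ 0 one has (in ℤ): D(n,k) = (1+k)·D(n−1,k) + (n−2k+1)·D(n−1,k−1) + k·T(n−1,k) + (n−2k+2)·T(n−1,k−1) + D⁻(n−1,k−1), where terms with second argument −1 vanish. -/

import Mathlib

/-!
Every signed permutation of rank `m + 1` arises uniquely by inserting `±(m+1)` at some position of
a signed permutation `π` of rank `m` (`insPerm_bijective`). The result is simsun iff `π` is simsun
and the new word has no double descent (`isSimsun_insPerm`), and it is even-signed iff the inserted
sign is `+` and `π` is even-signed, or the sign is `-` and `π` is not. So it suffices to count, for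
a word `0 π(1) ⋯ π(m)` without double descents and with `d` descents, the admissible gaps.

* For `+(m+1)`: the `d` descent gaps and the last gap keep the descent number. An ascent gap raises
  it by one and is admissible iff no descent follows immediately; there are
  `m - 2d + [π(1) < 0]` of these (`insCount_pos`).
* For `-(m+1)`: the `d` descent gaps keep the descent number. An ascent gap or the last gap raises
  it by one and is admissible iff no descent precedes it immediately; there are `m - 2d + 1` of
  these (`insCount_neg`).

Both counts are proved for arbitrary integer lists by induction on the list. Summing over `π`
(`Dcnt_succ`) gives the recurrence, the term `D⁻` coming from the bracket `[π(1) < 0]`.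
-/

open Finset

/-- A signed permutation of rank `n`, encoded as an (unsigned) permutation of
`Fin n` together with a choice of sign for each position: the entry
`π(i+1)` of the word is `±(σ(i)+1)` where the sign is `-` iff `sgn i = true`. -/
abbrev SignedPerm (n : ℕ) := Equiv.Perm (Fin n) × (Fin n → Bool)

/-- The entry `π(j+1)` of the word of a signed permutation. -/
def entry {n : ℕ} (π : SignedPerm n) (j : Fin n) : ℤ :=
  (if π.2 j then -1 else 1) * (((π.1 j : ℕ) : ℤ) + 1)

/-- The word `π(0)π(1)⋯π(n)` of a signed permutation (with the leading `0`). -/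
def word {n : ℕ} (π : SignedPerm n) : List ℤ :=
  0 :: List.ofFn (entry π)

/-- `π(i)` for `0 ≤ i ≤ n` (and `0` outside this range). -/
def wordFn {n : ℕ} (π : SignedPerm n) (i : ℕ) : ℤ :=
  if h : 1 ≤ i ∧ i ≤ n then entry π ⟨i - 1, by omega⟩ else 0

/-- A word has no double descent: no three consecutive strictly decreasing entries. -/
def noDD : List ℤ → Bool
  | a :: b :: c :: rest => (!(decide (b < a) && decide (c < b))) && noDD (b :: c :: rest)
  | _ => true

/-- A signed permutation is simsun if for every `0 ≤ k ≤ n`, deleting the entries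
`±n, …, ±(n-k+1)` (i.e. keeping the entries of absolute value `≤ m := n - k`) from the
word `π(0)π(1)⋯π(n)` leaves a word with no three consecutive strictly decreasing
entries. -/
def IsSimsun {n : ℕ} (π : SignedPerm n) : Prop :=
  ∀ m ≤ n, noDD ((word π).filter (fun a => a.natAbs ≤ m)) = true

instance {n : ℕ} : DecidablePred (IsSimsun (n := n)) := fun _ => by
  unfold IsSimsun; infer_instance

/-- The type-B descent number `des_B(π) = #{0 ≤ i ≤ n-1 : π(i) > π(i+1)}`. -/
def desB {n : ℕ} (π : SignedPerm n) : ℕ :=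
  ((Finset.range n).filter (fun i => wordFn π (i + 1) < wordFn π i)).card

/-- The set of signed simsun permutations of rank `n`. -/
def RB (n : ℕ) : Finset (SignedPerm n) := univ.filter IsSimsun

/-- Signed simsun permutations with `π(1) > 0` (for `n = 0`, the empty permutation
is included, following the convention `R⁺_0 = 1`). -/
def RBp (n : ℕ) : Finset (SignedPerm n) :=
  (RB n).filter (fun π => 0 < wordFn π 1 ∨ n = 0)

/-- Signed simsun permutations with `π(1) < 0`. -/
def RBm (n : ℕ) : Finset (SignedPerm n) :=
  (RB n).filter (fun π => wordFn π 1 < 0)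

/-- A signed permutation is even-signed if its word has an even number of negative entries. -/
def IsEvenSigned {n : ℕ} (π : SignedPerm n) : Prop :=
  (univ.filter (fun j => π.2 j = true)).card % 2 = 0

instance {n : ℕ} : DecidablePred (IsEvenSigned (n := n)) := fun _ => by
  unfold IsEvenSigned; infer_instance

def RD (n : ℕ) : Finset (SignedPerm n) := (RB n).filter IsEvenSigned
def RT (n : ℕ) : Finset (SignedPerm n) := (RB n).filter (fun π => ¬ IsEvenSigned π)
def RDp (n : ℕ) : Finset (SignedPerm n) := (RD n).filter (fun π => 0 < wordFn π 1 ∨ n = 0)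
def RDm (n : ℕ) : Finset (SignedPerm n) := (RD n).filter (fun π => wordFn π 1 < 0)
def RTp (n : ℕ) : Finset (SignedPerm n) := (RT n).filter (fun π => 0 < wordFn π 1 ∨ n = 0)
def RTm (n : ℕ) : Finset (SignedPerm n) := (RT n).filter (fun π => wordFn π 1 < 0)

/-- `R(n,k)`, as an integer, vanishing for `k < 0`. -/
def Rcnt (n : ℕ) (k : ℤ) : ℤ := ((RB n).filter (fun π => (desB π : ℤ) = k)).card
def Rpcnt (n : ℕ) (k : ℤ) : ℤ := ((RBp n).filter (fun π => (desB π : ℤ) = k)).card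
def Rmcnt (n : ℕ) (k : ℤ) : ℤ := ((RBm n).filter (fun π => (desB π : ℤ) = k)).card
def Dcnt (n : ℕ) (k : ℤ) : ℤ := ((RD n).filter (fun π => (desB π : ℤ) = k)).card
def Tcnt (n : ℕ) (k : ℤ) : ℤ := ((RT n).filter (fun π => (desB π : ℤ) = k)).card
def Dpcnt (n : ℕ) (k : ℤ) : ℤ := ((RDp n).filter (fun π => (desB π : ℤ) = k)).card
def Dmcnt (n : ℕ) (k : ℤ) : ℤ := ((RDm n).filter (fun π => (desB π : ℤ) = k)).card
def Tpcnt (n : ℕ) (k : ℤ) : ℤ := ((RTp n).filter (fun π => (desB π : ℤ) = k)).card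
def Tmcnt (n : ℕ) (k : ℤ) : ℤ := ((RTm n).filter (fun π => (desB π : ℤ) = k)).card

/-! ### Descents and insertion gaps of integer lists -/

/-- Number of descents of a list (integer-valued, so that it compares directly with `k`). -/
def desL : List ℤ → ℤ
  | a :: b :: l => (if b < a then 1 else 0) + desL (b :: l)
  | _ => 0

/-- `1` if the list starts with a descent, else `0`. -/
def headDes : List ℤ → ℤ
  | a :: b :: _ => if b < a then 1 else 0
  | _ => 0

/-- Number of gaps of `a :: l` into which `x` can be inserted so that the result has no
double descent and exactly `d` descents. -/
def insCount (a : ℤ) (l : List ℤ) (x d : ℤ) : ℤ :=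
  ∑ p ∈ range (l.length + 1),
    if noDD (a :: l.insertIdx p x) = true ∧ desL (a :: l.insertIdx p x) = d then 1 else 0

theorem noDD_cons3 (a b c : ℤ) (l : List ℤ) :
    noDD (a :: b :: c :: l) = true ↔ ¬ (b < a ∧ c < b) ∧ noDD (b :: c :: l) = true := by
  simp only [noDD, Bool.and_eq_true, Bool.not_eq_true', Bool.and_eq_false_iff,
    decide_eq_false_iff_not]
  tauto

theorem noDD_tail (a : ℤ) (l : List ℤ) (h : noDD (a :: l) = true) : noDD l = true := by
  match l with
  | [] => rfl
  | [b] => rfl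
  | b :: c :: l => exact ((noDD_cons3 _ _ _ _).1 h).2

theorem insCount_nil (a x d : ℤ) :
    insCount a [] x d = if (if x < a then 1 else 0) = d then 1 else 0 := by
  rw [insCount, List.length_nil, zero_add, Finset.sum_range_one]
  simp [noDD, desL]

/-- Separates the first gap (insertion of `x` between `a` and `b`) from the gaps of `b :: l`. -/
theorem insCount_cons (a b : ℤ) (l : List ℤ) (x d : ℤ) :
    insCount a (b :: l) x d =
      (∑ p ∈ range (l.length + 1),
        if noDD (a :: b :: l.insertIdx p x) = true ∧
          desL (b :: l.insertIdx p x) = d - (if b < a then 1 else 0) then 1 else 0) +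
      if noDD (a :: x :: b :: l) = true ∧ desL (a :: x :: b :: l) = d then 1 else 0 := by
  unfold insCount
  rw [List.length_cons, Finset.sum_range_succ']
  simp [desL, eq_sub_iff_add_eq, add_comm]

/-- Inserting a letter `x` larger than all others keeps the descent number in the `des` descent
gaps and in the final gap; it raises it by one in each ascent gap that is not followed by a
descent. Every descent except an initial one follows an ascent, which leaves
`length - 2 * des + headDes` such gaps. -/
theorem insCount_pos (l : List ℤ) : ∀ (a x d : ℤ), noDD (a :: l) = true →
    (∀ y ∈ a :: l, y < x) →
    insCount a l x d = (if desL (a :: l) = d then 1 + d else 0) +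
      (if desL (a :: l) = d - 1 then (l.length : ℤ) - 2 * (d - 1) + headDes (a :: l) else 0) := by
  induction l with
  | nil =>
    intro a x d _ hx
    have h0 : ¬ x < a := not_lt.2 (hx a (by simp)).le
    simp only [insCount_nil, h0, if_false, desL, headDes, List.length_nil]
    push_cast
    split_ifs <;> omega
  | cons b l ih =>
    intro a x d h hx
    have ha := hx a (by simp)
    have hb := hx b (by simp)
    have hbl := noDD_tail _ _ h
    -- An insertion to the right of `b` cannot create a double descent starting at `a`.
    have key : ∀ p, noDD (a :: b :: l.insertIdx p x) = true ↔
        noDD (b :: l.insertIdx p x) = true := by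
      intro p
      match l, p with
      | [], 0 => simp [noDD]; omega
      | [], p+1 => simp [noDD]
      | c :: l, 0 =>
        rw [List.insertIdx_zero, noDD_cons3]
        have : ¬ (b < a ∧ x < b) := by omega
        simp [this]
      | c :: l, p+1 =>
        rw [List.insertIdx_succ_cons, noDD_cons3]
        simp [((noDD_cons3 _ _ _ _).1 h).1]
    rw [insCount_cons]
    simp only [key]
    have hI := ih b x (d - if b < a then 1 else 0) hbl
      (fun y hy => hx y (List.mem_cons_of_mem _ hy))
    unfold insCount at hI
    rw [hI]
    match l, h, hbl with
    | [], _, _ =>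
      simp only [noDD, desL, headDes, List.length_nil, List.length_cons]
      have h1 : ¬ x < a := by omega
      simp only [h1, hb]
      simp
      split_ifs <;> omega
    | c :: l, h, hbl =>
      have h2 := ((noDD_cons3 _ _ _ _).1 h).1
      have h1 : ¬ x < a := by omega
      simp only [noDD_cons3, desL, headDes, List.length_cons, hbl, hb, h1]
      simp
      split_ifs <;> omega

/-- Inserting a letter `x` smaller than all others keeps the descent number in the `des` descent
gaps; it raises it by one in each ascent gap, or the final gap, that is not preceded by a
descent. Every descent is followed by one of these `length - des + 1` gaps, which leaves
`length - 2 * des + 1` of them. -/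
theorem insCount_neg (l : List ℤ) : ∀ (a x d : ℤ), noDD (a :: l) = true →
    (∀ y ∈ a :: l, x < y) →
    insCount a l x d = (if desL (a :: l) = d then d else 0) +
      (if desL (a :: l) = d - 1 then (l.length : ℤ) - 2 * (d - 1) + 1 else 0) := by
  induction l with
  | nil =>
    intro a x d _ hx
    have h0 : x < a := hx a (by simp)
    simp only [insCount_nil, h0, if_true, desL, List.length_nil]
    push_cast
    split_ifs <;> omega
  | cons b l ih =>
    intro a x d h hx
    have ha := hx a (by simp)
    have hb := hx b (by simp)
    have hbl := noDD_tail _ _ h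
    -- Only an insertion immediately after `b` can create a double descent starting at `a`.
    have key : ∀ p, noDD (a :: b :: l.insertIdx (p+1) x) = true ↔
        noDD (b :: l.insertIdx (p+1) x) = true := by
      intro p
      match l with
      | [] => simp [noDD]
      | c :: l =>
        rw [List.insertIdx_succ_cons, noDD_cons3]
        simp [((noDD_cons3 _ _ _ _).1 h).1]
    have hI := ih b x (d - if b < a then 1 else 0) hbl
      (fun y hy => hx y (List.mem_cons_of_mem _ hy))
    unfold insCount at hI
    rw [insCount_cons]
    rw [Finset.sum_range_succ'] at hI ⊢
    simp only [key]
    -- The gap immediately after `b` is traded, via `hI`, for the total count over `b :: l`.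
    rw [← sub_eq_iff_eq_add.2 hI.symm]
    simp only [List.insertIdx_zero]
    clear hI key
    match l, h, hbl with
    | [], _, _ =>
      simp only [noDD, desL, List.length_nil, List.length_cons]
      simp only [hb, ha]
      simp
      split_ifs <;> omega
    | c :: l, h, hbl =>
      have h2 := ((noDD_cons3 _ _ _ _).1 h).1
      have hc := hx c (by simp)
      have h1 : ¬ b < x := by omega
      have h4 : ¬ c < x := by omega
      have h3 : noDD (x :: c :: l) = true := by
        have h5 := noDD_tail _ _ hbl
        cases l with
        | nil => rfl
        | cons e l => exact (noDD_cons3 _ _ _ _).2 ⟨fun h => h4 h.1, h5⟩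
      simp only [noDD_cons3, desL, List.length_cons, hbl, h3, hb, h1, ha, h4]
      simp
      split_ifs <;> omega

/-! ### Words of signed permutations -/

theorem desL_eq_card (l : List ℤ) :
    ((((range (l.length - 1)).filter (fun i => l.getD (i + 1) 0 < l.getD i 0)).card : ℕ) : ℤ)
      = desL l := by
  induction l with
  | nil => simp [desL]
  | cons a l ih =>
    cases l with
    | nil => simp [desL]
    | cons b l =>
      rw [desL, ← ih]
      simp only [Finset.card_filter, List.length_cons, Nat.add_sub_cancel]
      rw [Finset.sum_range_succ', add_comm]
      push_cast
      simp

theorem wordFn_eq_getD {n : ℕ} (π : SignedPerm n) (i : ℕ) : wordFn π i = (word π).getD i 0 := by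
  unfold wordFn word
  cases i with
  | zero => simp
  | succ i =>
    by_cases h : i < n
    · simp [h]
    · simp [h]

theorem desB_eq_desL {n : ℕ} (π : SignedPerm n) : (desB π : ℤ) = desL (word π) := by
  rw [← desL_eq_card]
  unfold desB
  simp only [wordFn_eq_getD]
  simp [word]

theorem headDes_word {n : ℕ} (π : SignedPerm n) :
    headDes (word π) = if wordFn π 1 < 0 then 1 else 0 := by
  rw [wordFn_eq_getD]
  unfold word
  cases List.ofFn (entry π) <;> simp [headDes]

/-! ### Insertion of the largest letter -/

/-- Insertion of the letter `±(m+1)` (sign `-` iff `b`) into a signed permutation of rank `m`, so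
that it occupies position `p`; the argument is the triple `(π, p, b)`. Positions start at
`0`, the letter `m+1` is `Fin.last m`, and the old positions are shifted along `p.succAbove`. -/
def insPerm {m : ℕ} (x : SignedPerm m × Fin (m + 1) × Bool) : SignedPerm (m + 1) :=
  (((finSuccEquiv' x.2.1).trans (Equiv.optionCongr x.1.1)).trans
      (finSuccEquiv' (Fin.last m)).symm,
    x.2.1.insertNth (α := fun _ => Bool) x.2.2 x.1.2)

theorem insPerm_fst_self {m : ℕ} (π : SignedPerm m) (p : Fin (m + 1)) (b : Bool) :
    (insPerm (π, p, b)).1 p = Fin.last m := by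
  simp [insPerm]

theorem insPerm_fst_succAbove {m : ℕ} (π : SignedPerm m) (p : Fin (m + 1)) (b : Bool)
    (j : Fin m) : (insPerm (π, p, b)).1 (p.succAbove j) = (π.1 j).castSucc := by
  simp [insPerm]

theorem insPerm_bijective (m : ℕ) : Function.Bijective (insPerm (m := m)) := by
  rw [Fintype.bijective_iff_injective_and_card]
  constructor
  · rintro ⟨⟨σ, s⟩, p, b⟩ ⟨⟨σ₂, s₂⟩, p₂, b₂⟩ h
    have hp : p = p₂ := by
      apply (insPerm ((σ, s), p, b)).1.injective
      rw [insPerm_fst_self, h, insPerm_fst_self]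
    subst hp
    have h2 : (insPerm ((σ, s), p, b)).2 = (insPerm ((σ₂, s₂), p, b₂)).2 := by rw [h]
    have hb : b = b₂ := by simpa [insPerm] using congrFun h2 p
    have hs : s = s₂ := by
      funext j
      simpa [insPerm] using congrFun h2 (p.succAbove j)
    have hσ : σ = σ₂ := by
      ext j
      have := insPerm_fst_succAbove (σ, s) p b j
      rw [h, insPerm_fst_succAbove] at this
      simpa using (congrArg Fin.val this).symm
    subst hb hs hσ
    rfl
  · simp [Fintype.card_perm, Nat.factorial_succ, pow_succ]
    ring

/-- The letter `±(m+1)` inserted by `insPerm`, with sign `-` iff `b`. -/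
def newEntry (m : ℕ) (b : Bool) : ℤ := (if b then -1 else 1) * ((m : ℤ) + 1)

theorem entry_insPerm_self {m : ℕ} (π : SignedPerm m) (p : Fin (m + 1)) (b : Bool) :
    entry (insPerm (π, p, b)) p = newEntry m b := by
  rw [entry, insPerm_fst_self]
  simp [insPerm, newEntry]

theorem entry_insPerm_succAbove {m : ℕ} (π : SignedPerm m) (p : Fin (m + 1)) (b : Bool)
    (j : Fin m) : entry (insPerm (π, p, b)) (p.succAbove j) = entry π j := by
  rw [entry, insPerm_fst_succAbove]
  simp [insPerm, entry]

theorem word_insPerm {m : ℕ} (π : SignedPerm m) (p : Fin (m + 1)) (b : Bool) :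
    word (insPerm (π, p, b)) = 0 :: (List.ofFn (entry π)).insertIdx p (newEntry m b) := by
  unfold word
  congr 1
  have hp := p.2
  apply List.ext_getElem
  · rw [List.length_insertIdx_of_le_length (by simp; omega)]
    simp
  · intro i h1 h2
    have hi : i < m + 1 := by simpa using h1
    rw [List.getElem_insertIdx, List.getElem_ofFn]
    rcases lt_trichotomy i p with h | h | h
    · rw [dif_pos h, List.getElem_ofFn, ← entry_insPerm_succAbove π p b]
      congr 1
      ext
      simp [Fin.succAbove, Fin.lt_def, h]
    · rw [dif_neg (by omega), dif_pos h, ← entry_insPerm_self π p b]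
      congr 1
      ext
      exact h
    · rw [dif_neg (by omega), dif_neg (by omega), List.getElem_ofFn,
        ← entry_insPerm_succAbove π p b]
      congr 1
      ext
      have : ¬ (i - 1 < (p : ℕ)) := by omega
      simp [Fin.succAbove, Fin.lt_def, this]
      omega

theorem filter_insertIdx_of_not (P : ℤ → Bool) (x : ℤ) (hx : P x = false) (l : List ℤ) :
    ∀ p, (l.insertIdx p x).filter P = l.filter P := by
  induction l with
  | nil => intro p; cases p <;> simp [hx]
  | cons a l ih => intro p; cases p <;> simp [hx, List.filter_cons, ih]

theorem natAbs_entry {n : ℕ} (π : SignedPerm n) (j : Fin n) :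
    (entry π j).natAbs = (π.1 j : ℕ) + 1 := by
  unfold entry
  split_ifs <;> omega

theorem natAbs_le_of_mem_word {n : ℕ} (π : SignedPerm n) (y : ℤ) (hy : y ∈ word π) :
    y.natAbs ≤ n := by
  unfold word at hy
  rcases List.mem_cons.1 hy with rfl | hy
  · simp
  · rw [List.mem_ofFn] at hy
    obtain ⟨j, rfl⟩ := hy
    rw [natAbs_entry]
    exact (π.1 j).2

theorem filter_word_self {n : ℕ} (π : SignedPerm n) :
    (word π).filter (fun a => a.natAbs ≤ n) = word π := by
  rw [List.filter_eq_self]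
  intro y hy
  simpa using natAbs_le_of_mem_word π y hy

theorem IsSimsun.noDD_word {n : ℕ} {π : SignedPerm n} (h : IsSimsun π) :
    noDD (word π) = true := by
  have := h n le_rfl
  rwa [filter_word_self] at this

theorem natAbs_newEntry (m : ℕ) (b : Bool) : (newEntry m b).natAbs = m + 1 := by
  unfold newEntry
  split_ifs <;> omega

/-- Restricting the word to letters of absolute value at most `r ≤ m` erases the inserted letter,
so only the full word gives a new condition. -/
theorem isSimsun_insPerm {m : ℕ} (π : SignedPerm m) (p : Fin (m + 1)) (b : Bool) :
    IsSimsun (insPerm (π, p, b)) ↔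
      IsSimsun π ∧ noDD (word (insPerm (π, p, b))) = true := by
  have key : ∀ r ≤ m, (word (insPerm (π, p, b))).filter (fun a => a.natAbs ≤ r) =
      (word π).filter (fun a => a.natAbs ≤ r) := by
    intro r hr
    rw [word_insPerm, word, List.filter_cons, List.filter_cons, filter_insertIdx_of_not]
    rw [natAbs_newEntry]
    simp; omega
  constructor
  · intro h
    refine ⟨fun r hr => ?_, h.noDD_word⟩
    rw [← key r hr]
    exact h r (by omega)
  · rintro ⟨h, h₂⟩ r hr
    rcases Nat.lt_or_ge m r with h1 | h1
    · obtain rfl : r = m + 1 := by omega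
      rwa [filter_word_self]
    · rw [key r h1]
      exact h r h1

theorem isEvenSigned_insPerm {m : ℕ} (π : SignedPerm m) (p : Fin (m + 1)) (b : Bool) :
    IsEvenSigned (insPerm (π, p, b)) ↔ (if b then ¬ IsEvenSigned π else IsEvenSigned π) := by
  unfold IsEvenSigned
  rw [Finset.card_filter, Finset.card_filter, Fin.sum_univ_succAbove _ p]
  simp only [insPerm, Fin.insertNth_apply_same, Fin.insertNth_apply_succAbove]
  cases b <;> simp
  omega

theorem sum_insPerm {m : ℕ} (π : SignedPerm m) (b : Bool) (k : ℤ) :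
    (∑ p : Fin (m + 1), if noDD (word (insPerm (π, p, b))) = true ∧
        (desB (insPerm (π, p, b)) : ℤ) = k then (1 : ℤ) else 0) =
      insCount 0 (List.ofFn (entry π)) (newEntry m b) k := by
  unfold insCount
  rw [List.length_ofFn, Finset.sum_range]
  simp only [desB_eq_desL, word_insPerm]

/-! ### Counting -/

theorem Dcnt_eq (n : ℕ) (k : ℤ) :
    Dcnt n k = ∑ π : SignedPerm n,
      if IsSimsun π ∧ IsEvenSigned π ∧ (desB π : ℤ) = k then 1 else 0 := by
  unfold Dcnt RD RB
  rw [Finset.filter_filter, Finset.filter_filter, Finset.natCast_card_filter]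

theorem Tcnt_eq (n : ℕ) (k : ℤ) :
    Tcnt n k = ∑ π : SignedPerm n,
      if IsSimsun π ∧ ¬ IsEvenSigned π ∧ (desB π : ℤ) = k then 1 else 0 := by
  unfold Tcnt RT RB
  rw [Finset.filter_filter, Finset.filter_filter, Finset.natCast_card_filter]

theorem Dmcnt_eq (n : ℕ) (k : ℤ) :
    Dmcnt n k = ∑ π : SignedPerm n,
      if IsSimsun π ∧ IsEvenSigned π ∧ wordFn π 1 < 0 ∧ (desB π : ℤ) = k then 1 else 0 := by
  unfold Dmcnt RDm RD RB
  rw [Finset.filter_filter, Finset.filter_filter, Finset.filter_filter,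
    Finset.natCast_card_filter]

/-- Even-signed permutations of rank `m + 1` arise by inserting `+(m+1)` into an even-signed
permutation or `-(m+1)` into one that is not. -/
theorem Dcnt_succ (m : ℕ) (k : ℤ) :
    Dcnt (m + 1) k = ∑ π : SignedPerm m,
      if IsSimsun π then
        insCount 0 (List.ofFn (entry π)) (newEntry m (decide (¬ IsEvenSigned π))) k
      else 0 := by
  rw [Dcnt_eq, ← (insPerm_bijective m).sum_comp, Fintype.sum_prod_type]
  refine Finset.sum_congr rfl fun π _ => ?_
  rw [Fintype.sum_prod_type, ← sum_insPerm]
  simp only [Fintype.sum_bool, isSimsun_insPerm, isEvenSigned_insPerm]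
  by_cases h1 : IsSimsun π <;> by_cases h2 : IsEvenSigned π <;> simp [h1, h2]

/-- For all integers `n ≥ 1`, `k ≥ 0`:
`D(n,k) = (1+k)·D(n−1,k) + (n−2k+1)·D(n−1,k−1) + k·T(n−1,k) + (n−2k+2)·T(n−1,k−1) + D⁻(n−1,k−1)`. -/
theorem stmt11 (n : ℕ) (hn : 1 ≤ n) (k : ℤ) (hk : 0 ≤ k) :
    Dcnt n k =
      (1 + k) * Dcnt (n - 1) k + ((n : ℤ) - 2 * k + 1) * Dcnt (n - 1) (k - 1) +
        k * Tcnt (n - 1) k + ((n : ℤ) - 2 * k + 2) * Tcnt (n - 1) (k - 1) +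
          Dmcnt (n - 1) (k - 1) := by
  obtain ⟨m, rfl⟩ : ∃ m, n = m + 1 := ⟨n - 1, by omega⟩
  rw [Nat.add_sub_cancel, Dcnt_succ, Dcnt_eq, Dcnt_eq, Tcnt_eq, Tcnt_eq, Dmcnt_eq]
  simp only [Finset.mul_sum, ← Finset.sum_add_distrib]
  refine Finset.sum_congr rfl fun π _ => ?_
  by_cases h1 : IsSimsun π
  swap
  · simp [h1]
  have hw : noDD (0 :: List.ofFn (entry π)) = true := h1.noDD_word
  have hd : desL (0 :: List.ofFn (entry π)) = (desB π : ℤ) := (desB_eq_desL π).symm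
  have hh : headDes (0 :: List.ofFn (entry π)) = if wordFn π 1 < 0 then 1 else 0 :=
    headDes_word π
  have hle : ∀ y ∈ 0 :: List.ofFn (entry π), y.natAbs ≤ m := natAbs_le_of_mem_word π
  by_cases h2 : IsEvenSigned π
  · have hlt : ∀ y ∈ 0 :: List.ofFn (entry π), y < newEntry m false := by
      intro y hy
      have := hle y hy
      simp [newEntry]
      omega
    simp only [h1, h2, not_true_eq_false, decide_false, if_true, true_and, false_and, if_false]
    rw [insCount_pos _ _ _ _ hw hlt, hd, hh, List.length_ofFn]
    push_cast
    split_ifs <;> omega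
  · have hlt : ∀ y ∈ 0 :: List.ofFn (entry π), newEntry m true < y := by
      intro y hy
      have := hle y hy
      simp [newEntry]
      omega
    simp only [h1, h2, not_false_eq_true, decide_true, if_true, true_and, false_and, if_false]
    rw [insCount_neg _ _ _ _ hw hlt, hd, List.length_ofFn]
    push_cast
    split_ifs <;> omega
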